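/- Every vector in S is an integer linear combination of the eight vectors A₀, B₀, C₀, D₀, E₀, F₀, G₀, H₀; that is, for every v ∈ S there exist integers m₁,…,m₈ with v = m₁A₀ + m₂B₀ + m₃C₀ + m₄D₀ + m₅E₀ + m₆F₀ + m₇G₀ + m₈H₀. -/

import Mathlib

noncomputable section
open Real Complex

namespace Triacontagonal

/-- The golden ratio. -/
def τ : ℝ := (1 + Real.sqrt 5) / 2

/-- The constant 3^(-1/2) * 5^(-1/4). -/
def k0 : ℝ := (3 : ℝ) ^ (-(1:ℝ)/2) * (5 : ℝ) ^ (-(1:ℝ)/4)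

/-- `a` is the positive real with 2a² = 1 + 3^(-1/2)·5^(-1/4)·τ^(3/2). -/
def a : ℝ := Real.sqrt ((1 + k0 * τ ^ ((3:ℝ)/2)) / 2)

/-- `b` is the positive real with 2b² = 1 + 3^(-1/2)·5^(-1/4)·τ^(-3/2). -/
def b : ℝ := Real.sqrt ((1 + k0 * τ ^ (-((3:ℝ)/2))) / 2)

/-- `c` is the positive real with 2c² = 1 - 3^(-1/2)·5^(-1/4)·τ^(-3/2). -/
def c : ℝ := Real.sqrt ((1 - k0 * τ ^ (-((3:ℝ)/2))) / 2)

/-- `d` is the positive real with 2d² = 1 - 3^(-1/2)·5^(-1/4)·τ^(3/2). -/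
def d : ℝ := Real.sqrt ((1 - k0 * τ ^ ((3:ℝ)/2)) / 2)

/-- `cc n = 2 cos(nπ/30)`. -/
def cc (n : ℤ) : ℝ := 2 * Real.cos (n * Real.pi / 30)

/-- `ω = exp(iπ/30)`, a primitive 60th root of unity. -/
def ω : ℂ := Complex.exp (Real.pi * Complex.I / 30)

def r1 : ℝ := a / cc 9
def r2 : ℝ := b / cc 9
def r3 : ℝ := c / cc 9
def r4 : ℝ := d / cc 9
def r5 : ℝ := a / cc 3
def r6 : ℝ := b / cc 3
def r7 : ℝ := c / cc 3
def r8 : ℝ := d / cc 3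

/-- The eight cycles of 30 vectors each in ℂ⁴. -/
def A (n : Fin 30) : Fin 4 → ℂ :=
  ![(r1 : ℂ) * ω ^ (2 * (n : ℕ)), (r4 : ℂ) * ω ^ (22 * (n : ℕ)),
    (r6 : ℂ) * ω ^ (14 * (n : ℕ) + 1), (r7 : ℂ) * ω ^ (26 * (n : ℕ) + 1)]

def B (n : Fin 30) : Fin 4 → ℂ :=
  ![(r2 : ℂ) * ω ^ (2 * (n : ℕ) + 29), (r3 : ℂ) * ω ^ (22 * (n : ℕ) + 19),
    -((r8 : ℂ) * ω ^ (14 * (n : ℕ) + 24)), -((r5 : ℂ) * ω ^ (26 * (n : ℕ) + 18))]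

def C (n : Fin 30) : Fin 4 → ℂ :=
  ![(r3 : ℂ) * ω ^ (2 * (n : ℕ) + 29), -((r2 : ℂ) * ω ^ (22 * (n : ℕ) + 19)),
    (r5 : ℂ) * ω ^ (14 * (n : ℕ) + 24), -((r8 : ℂ) * ω ^ (26 * (n : ℕ) + 18))]

def D (n : Fin 30) : Fin 4 → ℂ :=
  ![(r4 : ℂ) * ω ^ (2 * (n : ℕ)), -((r1 : ℂ) * ω ^ (22 * (n : ℕ))),
    (r7 : ℂ) * ω ^ (14 * (n : ℕ) + 1), -((r6 : ℂ) * ω ^ (26 * (n : ℕ) + 1))]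

def E (n : Fin 30) : Fin 4 → ℂ :=
  ![(r5 : ℂ) * ω ^ (2 * (n : ℕ)), (r8 : ℂ) * ω ^ (22 * (n : ℕ)),
    -((r2 : ℂ) * ω ^ (14 * (n : ℕ) + 1)), -((r3 : ℂ) * ω ^ (26 * (n : ℕ) + 1))]

def F (n : Fin 30) : Fin 4 → ℂ :=
  ![(r6 : ℂ) * ω ^ (2 * (n : ℕ) + 29), (r7 : ℂ) * ω ^ (22 * (n : ℕ) + 19),
    (r4 : ℂ) * ω ^ (14 * (n : ℕ) + 24), (r1 : ℂ) * ω ^ (26 * (n : ℕ) + 18)]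

def G (n : Fin 30) : Fin 4 → ℂ :=
  ![(r7 : ℂ) * ω ^ (2 * (n : ℕ) + 29), -((r6 : ℂ) * ω ^ (22 * (n : ℕ) + 19)),
    -((r1 : ℂ) * ω ^ (14 * (n : ℕ) + 24)), (r4 : ℂ) * ω ^ (26 * (n : ℕ) + 18)]

def H (n : Fin 30) : Fin 4 → ℂ :=
  ![(r8 : ℂ) * ω ^ (2 * (n : ℕ)), -((r5 : ℂ) * ω ^ (22 * (n : ℕ))),
    -((r3 : ℂ) * ω ^ (14 * (n : ℕ) + 1)), (r2 : ℂ) * ω ^ (26 * (n : ℕ) + 1)]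

/-- The set of the 240 vectors. -/
def S : Set (Fin 4 → ℂ) :=
  {v | ∃ n : Fin 30, v = A n ∨ v = B n ∨ v = C n ∨ v = D n ∨
    v = E n ∨ v = F n ∨ v = G n ∨ v = H n}

/-- The real inner product on ℂ⁴: ⟨v,w⟩_ℝ = Re(Σᵢ vᵢ · conj(wᵢ)). -/
def rinner (v w : Fin 4 → ℂ) : ℝ := (∑ i, v i * star (w i)).re

/-- The associated Euclidean norm. -/
def enorm (v : Fin 4 → ℂ) : ℝ := Real.sqrt (rinner v v)

/-!
Write `cₙ` for `cc n`. Since `k0 √τ = 1 / (c₅ c₉)`, the four numbers under the square roots become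
`a² = c₄ / (c₅ c₉)`, `d² = c₁₄ / (c₅ c₉)`, `b² = c₂ / (τ c₅ c₉)`, `c² = c₈ / (τ c₅ c₉)`, and product
formulas for cosines turn these into `c = c₁ d`, `a = c₇ c`, `b = c₁₁ a`, `d = c₁₃ b`.

In the ring `ℂ⁴`, let `t` be the vector of 30th roots of unity with `Xₙ = tⁿ X₀` for each of the
eight cycles `X`, and let `φ` be the vector of the corresponding conjugates of `τ`, so that
`φ² = φ + 1`. The relations between the radii say that `A₀, B₀, C₀, D₀` are `φ` times
`E₀, F₀, G₀, H₀`, and that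
`t G₀ = -(1 + t) H₀`, `t H₀ = E₀ + G₀`, `t F₀ = -(A₀ + F₀)`, `t B₀ = (1 + t²) G₀`.
These identities alone force the `ℤ`-span of the eight initial vectors to be stable under `t`.
-/

section Cosines

lemma cc_neg (n : ℤ) : cc (-n) = cc n := by
  simp only [cc, Int.cast_neg, neg_mul, neg_div, Real.cos_neg]

lemma cc_thirty_sub (n : ℤ) : cc (30 - n) = -cc n := by
  have angle : ((30 - n : ℤ) : ℝ) * π / 30 = π - n * π / 30 := by push_cast; ring
  rw [cc, cc, angle, Real.cos_pi_sub, mul_neg]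

lemma cc_mul_cc (m n : ℤ) : cc m * cc n = cc (m + n) + cc (m - n) := by
  have h := Real.two_mul_cos_mul_cos (m * π / 30) (n * π / 30)
  simp only [cc, Int.cast_add, Int.cast_sub, add_mul, sub_mul, add_div, sub_div]
  linear_combination 2 * h

lemma cc_pos {n : ℤ} (h0 : 0 ≤ n) (h15 : n < 15) : 0 < cc n := by
  have hn0 : (0 : ℝ) ≤ n := by exact_mod_cast h0
  have hn15 : (n : ℝ) < 15 := by exact_mod_cast h15
  refine mul_pos two_pos (Real.cos_pos_of_mem_Ioo ⟨?_, ?_⟩) <;> nlinarith [Real.pi_pos]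

lemma cc_zero : cc 0 = 2 := by simp [cc]

lemma cc_six : cc 6 = τ := by
  rw [cc, show ((6 : ℤ) : ℝ) * π / 30 = π / 5 by push_cast; ring, Real.cos_pi_div_five, τ]
  ring

lemma cc_ten : cc 10 = 1 := by
  rw [cc, show ((10 : ℤ) : ℝ) * π / 30 = π / 3 by push_cast; ring, Real.cos_pi_div_three]
  norm_num

lemma cc_fifteen : cc 15 = 0 := by
  have h : cc 15 = -cc 15 := cc_thirty_sub 15
  linear_combination h / 2

lemma τ_pos : 0 < τ := Real.goldenRatio_pos

lemma τ_sq : τ ^ 2 = τ + 1 := Real.goldenRatio_sq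

lemma cc_twelve : cc 12 = τ - 1 := by
  have h : cc 6 * cc 6 = cc 12 + cc 0 := cc_mul_cc 6 6
  rw [cc_six, cc_zero] at h
  linear_combination τ_sq - h

lemma cc_add_ten (n : ℤ) : cc (n + 10) + cc (n - 10) = cc n := by
  rw [← cc_mul_cc, cc_ten, mul_one]

lemma cc_mul_cc_fifteen_sub (n : ℤ) : cc n * cc (15 - n) = cc (15 - 2 * n) := by
  rw [cc_mul_cc, add_sub_cancel, cc_fifteen, zero_add, ← cc_neg]
  congr 1
  ring

lemma cc_two_eq_add : cc 2 = cc 8 + cc 12 := by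
  have h : cc 12 + cc (-8) = cc 2 := cc_add_ten 2
  rw [cc_neg] at h
  linear_combination -h

lemma cc_four_eq_add : cc 4 = cc 14 + cc 6 := by
  have h : cc 14 + cc (-6) = cc 4 := cc_add_ten 4
  rw [cc_neg] at h
  linear_combination -h

lemma cc_three_eq_τ_mul : cc 3 = τ * cc 9 := by
  have h : cc 9 * cc 6 = cc 15 + cc 3 := cc_mul_cc 9 6
  rw [cc_six, cc_fifteen] at h
  linear_combination -h

lemma cc_one_mul_cc_eleven : cc 1 * cc 11 = τ := by
  have h : cc 11 * cc 1 = cc 12 + cc 10 := cc_mul_cc 11 1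
  rw [cc_twelve, cc_ten] at h
  linear_combination h

lemma τ_mul_cc_seven_mul_cc_thirteen : τ * (cc 7 * cc 13) = 1 := by
  have h : cc 13 * cc 7 = cc 20 + cc 6 := cc_mul_cc 13 7
  have h20 : cc 20 = -cc 10 := cc_thirty_sub 10
  rw [h20, cc_ten, cc_six] at h
  linear_combination τ * h + τ_sq

lemma cc_one_mul_cc_seven : cc 1 * cc 7 = 1 + cc 2 := by
  have h : cc 7 * cc 1 = cc 8 + cc 6 := cc_mul_cc 7 1
  linear_combination h - cc_two_eq_add + cc_six - cc_twelve

lemma cc_eleven_mul_cc_thirteen : cc 11 * cc 13 = cc 8 - 1 := by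
  have h : cc 13 * cc 11 = cc 24 + cc 2 := cc_mul_cc 13 11
  have h24 : cc 24 = -cc 6 := cc_thirty_sub 6
  linear_combination h + h24 + cc_two_eq_add - cc_six + cc_twelve

lemma cc_seven_mul_cc_eleven : cc 7 * cc 11 = 1 + cc 14 := by
  have h : cc 11 * cc 7 = cc 18 + cc 4 := cc_mul_cc 11 7
  have h18 : cc 18 = -cc 12 := cc_thirty_sub 12
  linear_combination h + h18 + cc_four_eq_add + cc_six - cc_twelve

lemma cc_one_mul_cc_thirteen : cc 1 * cc 13 = cc 4 - 1 := by
  have h : cc 13 * cc 1 = cc 14 + cc 12 := cc_mul_cc 13 1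
  linear_combination h - cc_four_eq_add - cc_six + cc_twelve

end Cosines

section Radii

lemma k0_sq : k0 ^ 2 = 1 / (3 * √5) := by
  have three : ((3 : ℝ) ^ (-(1 : ℝ) / 2)) ^ 2 = 3⁻¹ := by
    rw [← Real.rpow_mul_natCast (by norm_num)]
    norm_num [Real.rpow_neg_one]
  have five : ((5 : ℝ) ^ (-(1 : ℝ) / 4)) ^ 2 = (√5)⁻¹ := by
    rw [← Real.rpow_mul_natCast (by norm_num), Real.sqrt_eq_rpow, ← Real.rpow_neg (by norm_num)]
    norm_num
  rw [k0, mul_pow, three, five, one_div, mul_inv]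

lemma cc_five_pos : 0 < cc 5 := cc_pos (by norm_num) (by norm_num)

lemma cc_nine_pos : 0 < cc 9 := cc_pos (by norm_num) (by norm_num)

lemma cc_five_mul_cc_nine : cc 5 * cc 9 = cc 4 + cc 14 := by
  have h : cc 9 * cc 5 = cc 14 + cc 4 := cc_mul_cc 9 5
  linear_combination h

lemma τ_mul_cc_five_mul_cc_nine : τ * (cc 5 * cc 9) = cc 2 + cc 8 := by
  have h : cc 5 * cc 3 = cc 8 + cc 2 := cc_mul_cc 5 3
  linear_combination h - cc 5 * cc_three_eq_τ_mul

lemma cc_five_mul_cc_nine_sq : (cc 5 * cc 9) ^ 2 = 3 * (3 - τ) := by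
  have five : cc 5 * cc 5 = cc 10 + cc 0 := cc_mul_cc 5 5
  have nine : cc 9 * cc 9 = cc 18 + cc 0 := cc_mul_cc 9 9
  have h18 : cc 18 = -cc 12 := cc_thirty_sub 12
  rw [cc_ten, cc_zero] at five
  rw [h18, cc_twelve, cc_zero] at nine
  linear_combination cc 9 ^ 2 * five + 3 * nine

lemma k0_mul_sqrt_τ : k0 * √τ = 1 / (cc 5 * cc 9) := by
  have sqrt_five : √5 = τ * (3 - τ) := by
    have h : √5 = 2 * τ - 1 := by rw [τ]; ring
    linear_combination h + τ_sq
  have h5 : √5 ≠ 0 := by positivity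
  have k0_nonneg : 0 ≤ k0 := by rw [k0]; positivity
  have hs : 0 < cc 5 * cc 9 := mul_pos cc_five_pos cc_nine_pos
  rw [eq_div_iff hs.ne', ← pow_eq_one_iff_of_nonneg (by positivity) two_ne_zero, mul_pow,
    mul_pow, k0_sq, Real.sq_sqrt τ_pos.le, cc_five_mul_cc_nine_sq]
  field_simp
  exact sqrt_five.symm

lemma k0_mul_τ_rpow_three_halves : k0 * τ ^ ((3 : ℝ) / 2) = τ / (cc 5 * cc 9) := by
  have h : τ ^ ((3 : ℝ) / 2) = τ * √τ := by
    rw [Real.sqrt_eq_rpow, ← Real.rpow_one_add' τ_pos.le (by norm_num)]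
    norm_num
  rw [h, mul_left_comm, k0_mul_sqrt_τ, mul_one_div]

lemma k0_mul_τ_rpow_neg_three_halves :
    k0 * τ ^ (-((3 : ℝ) / 2)) = 1 / (τ ^ 2 * (cc 5 * cc 9)) := by
  have h : τ ^ (-((3 : ℝ) / 2)) = √τ / τ ^ 2 := by
    rw [Real.sqrt_eq_rpow, ← Real.rpow_sub_natCast τ_pos.ne']
    norm_num
  rw [h, ← mul_div_assoc, k0_mul_sqrt_τ, div_div, mul_comm (τ ^ 2)]

lemma a_eq_sqrt : a = √(cc 4 / (cc 5 * cc 9)) := by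
  have h5 := cc_five_pos.ne'
  have h9 := cc_nine_pos.ne'
  rw [a, k0_mul_τ_rpow_three_halves]
  congr 1
  field_simp
  linear_combination cc_five_mul_cc_nine - cc_four_eq_add - cc_six

lemma d_eq_sqrt : d = √(cc 14 / (cc 5 * cc 9)) := by
  have h5 := cc_five_pos.ne'
  have h9 := cc_nine_pos.ne'
  rw [d, k0_mul_τ_rpow_three_halves]
  congr 1
  field_simp
  linear_combination cc_five_mul_cc_nine + cc_four_eq_add + cc_six

lemma b_eq_sqrt : b = √(cc 2 / (τ * (cc 5 * cc 9))) := by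
  have h5 := cc_five_pos.ne'
  have h9 := cc_nine_pos.ne'
  have hτ := τ_pos.ne'
  rw [b, k0_mul_τ_rpow_neg_three_halves]
  congr 1
  field_simp
  linear_combination τ * τ_mul_cc_five_mul_cc_nine - τ * cc_two_eq_add - τ * cc_twelve - τ_sq

lemma c_eq_sqrt : c = √(cc 8 / (τ * (cc 5 * cc 9))) := by
  have h5 := cc_five_pos.ne'
  have h9 := cc_nine_pos.ne'
  have hτ := τ_pos.ne'
  rw [c, k0_mul_τ_rpow_neg_three_halves]
  congr 1
  field_simp
  linear_combination τ * τ_mul_cc_five_mul_cc_nine + τ * cc_two_eq_add + τ * cc_twelve + τ_sq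

lemma sqrt_eq_mul_sqrt {x y z : ℝ} (hz : 0 ≤ z) (h : x = z ^ 2 * y) : √x = z * √y := by
  rw [h, Real.sqrt_mul (sq_nonneg z), Real.sqrt_sq hz]

lemma c_eq_cc_one_mul_d : c = cc 1 * d := by
  have h5 := cc_five_pos.ne'
  have h9 := cc_nine_pos.ne'
  have hτ := τ_pos.ne'
  have h1 : cc 1 * cc 14 = cc 13 := cc_mul_cc_fifteen_sub 1
  have h7 : cc 7 * cc 8 = cc 1 := cc_mul_cc_fifteen_sub 7
  rw [c_eq_sqrt, d_eq_sqrt]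
  refine sqrt_eq_mul_sqrt (cc_pos (by norm_num) (by norm_num)).le ?_
  field_simp
  linear_combination -cc 8 * τ_mul_cc_seven_mul_cc_thirteen + τ * cc 13 * h7 - τ * cc 1 * h1

lemma a_eq_cc_seven_mul_c : a = cc 7 * c := by
  have h5 := cc_five_pos.ne'
  have h9 := cc_nine_pos.ne'
  have hτ := τ_pos.ne'
  have h7 : cc 7 * cc 8 = cc 1 := cc_mul_cc_fifteen_sub 7
  have h4 : cc 4 * cc 11 = cc 7 := cc_mul_cc_fifteen_sub 4
  rw [a_eq_sqrt, c_eq_sqrt]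
  refine sqrt_eq_mul_sqrt (cc_pos (by norm_num) (by norm_num)).le ?_
  field_simp
  linear_combination -cc 4 * cc_one_mul_cc_eleven + cc 1 * h4 - cc 7 * h7

lemma b_eq_cc_eleven_mul_a : b = cc 11 * a := by
  have h5 := cc_five_pos.ne'
  have h9 := cc_nine_pos.ne'
  have hτ := τ_pos.ne'
  have h4 : cc 4 * cc 11 = cc 7 := cc_mul_cc_fifteen_sub 4
  have h2 : cc 2 * cc 13 = cc 11 := cc_mul_cc_fifteen_sub 2
  rw [b_eq_sqrt, a_eq_sqrt]
  refine sqrt_eq_mul_sqrt (cc_pos (by norm_num) (by norm_num)).le ?_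
  field_simp
  linear_combination -cc 2 * τ_mul_cc_seven_mul_cc_thirteen + τ * cc 7 * h2 - τ * cc 11 * h4

lemma d_eq_cc_thirteen_mul_b : d = cc 13 * b := by
  rw [b_eq_cc_eleven_mul_a, a_eq_cc_seven_mul_c, c_eq_cc_one_mul_d]
  linear_combination -d * τ_mul_cc_seven_mul_cc_thirteen
    - d * cc 7 * cc 13 * cc_one_mul_cc_eleven

lemma div_cc_nine (x : ℝ) : x / cc 9 = τ * (x / cc 3) := by
  have h9 := cc_nine_pos.ne'
  have hτ := τ_pos.ne'
  rw [cc_three_eq_τ_mul]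
  field_simp

lemma r1_eq_τ_mul_r5 : r1 = τ * r5 := div_cc_nine a

lemma r2_eq_τ_mul_r6 : r2 = τ * r6 := div_cc_nine b

lemma r3_eq_τ_mul_r7 : r3 = τ * r7 := div_cc_nine c

lemma r4_eq_τ_mul_r8 : r4 = τ * r8 := div_cc_nine d

lemma r7_eq_cc_one_mul_r8 : r7 = cc 1 * r8 := by
  rw [r7, r8, c_eq_cc_one_mul_d, mul_div_assoc]

lemma r5_eq_cc_seven_mul_r7 : r5 = cc 7 * r7 := by
  rw [r5, r7, a_eq_cc_seven_mul_c, mul_div_assoc]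

lemma r6_eq_cc_eleven_mul_r5 : r6 = cc 11 * r5 := by
  rw [r6, r5, b_eq_cc_eleven_mul_a, mul_div_assoc]

lemma r8_eq_cc_thirteen_mul_r6 : r8 = cc 13 * r6 := by
  rw [r8, r6, d_eq_cc_thirteen_mul_b, mul_div_assoc]

lemma r1_eq_cc_seven_mul_r3 : r1 = cc 7 * r3 := by
  linear_combination r1_eq_τ_mul_r5 + τ * r5_eq_cc_seven_mul_r7 - cc 7 * r3_eq_τ_mul_r7

lemma r4_eq_cc_thirteen_mul_r2 : r4 = cc 13 * r2 := by
  linear_combination r4_eq_τ_mul_r8 + τ * r8_eq_cc_thirteen_mul_r6 - cc 13 * r2_eq_τ_mul_r6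

lemma r5_eq_one_add_cc_two_mul_r8 : r5 = (1 + cc 2) * r8 := by
  linear_combination r5_eq_cc_seven_mul_r7 + cc 7 * r7_eq_cc_one_mul_r8 + r8 * cc_one_mul_cc_seven

lemma r8_eq_cc_eight_sub_one_mul_r5 : r8 = (cc 8 - 1) * r5 := by
  linear_combination r8_eq_cc_thirteen_mul_r6 + cc 13 * r6_eq_cc_eleven_mul_r5
    + r5 * cc_eleven_mul_cc_thirteen

lemma r2_eq_one_add_cc_fourteen_mul_r3 : r2 = (1 + cc 14) * r3 := by
  linear_combination r2_eq_τ_mul_r6 + τ * r6_eq_cc_eleven_mul_r5 - cc 11 * r1_eq_τ_mul_r5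
    + cc 11 * r1_eq_cc_seven_mul_r3 + r3 * cc_seven_mul_cc_eleven

lemma r3_eq_cc_four_sub_one_mul_r2 : r3 = (cc 4 - 1) * r2 := by
  linear_combination r3_eq_τ_mul_r7 + τ * r7_eq_cc_one_mul_r8 - cc 1 * r4_eq_τ_mul_r8
    + cc 1 * r4_eq_cc_thirteen_mul_r2 + r2 * cc_one_mul_cc_thirteen

lemma r1_eq_cc_one_mul_r6 : r1 = cc 1 * r6 := by
  linear_combination r1_eq_τ_mul_r5 - r5 * cc_one_mul_cc_eleven - cc 1 * r6_eq_cc_eleven_mul_r5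

lemma r4_eq_cc_eleven_mul_r7 : r4 = cc 11 * r7 := by
  linear_combination r4_eq_τ_mul_r8 - r8 * cc_one_mul_cc_eleven - cc 11 * r7_eq_cc_one_mul_r8

lemma r6_eq_cc_seven_mul_r4 : r6 = cc 7 * r4 := by
  linear_combination -r6 * τ_mul_cc_seven_mul_cc_thirteen - τ * cc 7 * r8_eq_cc_thirteen_mul_r6
    - cc 7 * r4_eq_τ_mul_r8

lemma r7_eq_cc_thirteen_mul_r1 : r7 = cc 13 * r1 := by
  linear_combination -r7 * τ_mul_cc_seven_mul_cc_thirteen - τ * cc 13 * r5_eq_cc_seven_mul_r7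
    - cc 13 * r1_eq_τ_mul_r5

lemma r2_eq_cc_two_mul_r7 : r2 = cc 2 * r7 := by
  have h : cc 2 * cc 13 = cc 11 := cc_mul_cc_fifteen_sub 2
  linear_combination r2_eq_τ_mul_r6 + τ * r6_eq_cc_eleven_mul_r5 - τ * r5 * h
    - cc 2 * cc 13 * r1_eq_τ_mul_r5 - cc 2 * r7_eq_cc_thirteen_mul_r1

lemma r3_eq_cc_eight_mul_r6 : r3 = cc 8 * r6 := by
  have h : cc 7 * cc 8 = cc 1 := cc_mul_cc_fifteen_sub 7
  linear_combination r3_eq_τ_mul_r7 + τ * r7_eq_cc_one_mul_r8 - τ * r8 * h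
    - cc 7 * cc 8 * r4_eq_τ_mul_r8 - cc 8 * r6_eq_cc_seven_mul_r4

lemma r8_eq_cc_fourteen_mul_r1 : r8 = cc 14 * r1 := by
  have h : cc 1 * cc 14 = cc 13 := cc_mul_cc_fifteen_sub 1
  linear_combination r8_eq_cc_thirteen_mul_r6 - r6 * h - cc 14 * r1_eq_cc_one_mul_r6

lemma r5_eq_cc_four_mul_r4 : r5 = cc 4 * r4 := by
  have h : cc 4 * cc 11 = cc 7 := cc_mul_cc_fifteen_sub 4
  linear_combination r5_eq_cc_seven_mul_r7 - r7 * h - cc 4 * r4_eq_cc_eleven_mul_r7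

end Radii

section Relations

lemma ω_ne_zero : ω ≠ 0 := Complex.exp_ne_zero _

lemma ω_pow_thirty : ω ^ 30 = -1 := by
  rw [ω, ← Complex.exp_nat_mul, ← Complex.exp_pi_mul_I]
  congr 1
  push_cast
  ring

lemma ofReal_cc (n : ℤ) : (cc n : ℂ) = ω ^ n - ω ^ (30 - n) := by
  have inv_eq : ω ^ (30 - n) = -ω ^ (-n) := by
    rw [sub_eq_add_neg, zpow_add₀ ω_ne_zero, zpow_ofNat, ω_pow_thirty, neg_one_mul]
  rw [inv_eq, sub_neg_eq_add, ω, ← Complex.exp_int_mul, ← Complex.exp_int_mul, cc]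
  push_cast
  rw [Complex.two_cos]
  ring_nf

/-- Coordinatewise multiplication by this element of the ring `ℂ⁴` advances each of the eight
cycles by one step. Its entries are the primitive 30th roots of unity `ζ, ζ¹¹, ζ⁷, ζ¹³` for
`ζ = ω²`, one from each pair of complex conjugates. -/
def rotation : Fin 4 → ℂ := ![ω ^ 2, ω ^ 22, ω ^ 14, ω ^ 26]

/-- The images of `τ` under the four Galois conjugations `ζ ↦ ζ, ζ¹¹, ζ⁷, ζ¹³` that relate the
entries of `rotation`, as an element of the ring `ℂ⁴`. -/
def goldenScalar : Fin 4 → ℂ := ![τ, τ, 1 - τ, 1 - τ]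

lemma A_zero : A 0 = ![(r1 : ℂ), r4, r6 * ω, r7 * ω] := by simp [A]

lemma B_zero : B 0 = ![r2 * ω ^ 29, r3 * ω ^ 19, -(r8 * ω ^ 24), -(r5 * ω ^ 18)] := by simp [B]

lemma C_zero : C 0 = ![r3 * ω ^ 29, -(r2 * ω ^ 19), r5 * ω ^ 24, -(r8 * ω ^ 18)] := by simp [C]

lemma D_zero : D 0 = ![(r4 : ℂ), -r1, r7 * ω, -(r6 * ω)] := by simp [D]

lemma E_zero : E 0 = ![(r5 : ℂ), r8, -(r2 * ω), -(r3 * ω)] := by simp [E]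

lemma F_zero : F 0 = ![r6 * ω ^ 29, r7 * ω ^ 19, r4 * ω ^ 24, r1 * ω ^ 18] := by simp [F]

lemma G_zero : G 0 = ![r7 * ω ^ 29, -(r6 * ω ^ 19), -(r1 * ω ^ 24), r4 * ω ^ 18] := by simp [G]

lemma H_zero : H 0 = ![(r8 : ℂ), -r5, -(r3 * ω), r2 * ω] := by simp [H]

lemma funext_fin_four {α : Type*} {v w : Fin 4 → α} (h0 : v 0 = w 0) (h1 : v 1 = w 1)
    (h2 : v 2 = w 2) (h3 : v 3 = w 3) : v = w :=
  funext (Fin.forall_fin_succ.2 ⟨h0, Fin.forall_fin_succ.2 ⟨h1, Fin.forall_fin_two.2 ⟨h2, h3⟩⟩⟩)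

lemma ofReal_τ_sq : (τ : ℂ) ^ 2 = τ + 1 := mod_cast τ_sq

lemma goldenScalar_sq : goldenScalar ^ 2 = goldenScalar + 1 := by
  refine funext_fin_four ?_ ?_ ?_ ?_ <;>
    simp only [goldenScalar, Pi.pow_apply, Pi.add_apply, Pi.one_apply, Matrix.cons_val] <;>
    linear_combination ofReal_τ_sq

lemma A_zero_eq : A 0 = goldenScalar * E 0 := by
  refine funext_fin_four ?_ ?_ ?_ ?_ <;>
    simp only [A_zero, E_zero, goldenScalar, Pi.mul_apply, Matrix.cons_val, r1_eq_τ_mul_r5,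
      r2_eq_τ_mul_r6, r3_eq_τ_mul_r7, r4_eq_τ_mul_r8, ofReal_mul]
  · linear_combination -r6 * ω * ofReal_τ_sq
  · linear_combination -r7 * ω * ofReal_τ_sq

lemma B_zero_eq : B 0 = goldenScalar * F 0 := by
  refine funext_fin_four ?_ ?_ ?_ ?_ <;>
    simp only [B_zero, F_zero, goldenScalar, Pi.mul_apply, Matrix.cons_val, r1_eq_τ_mul_r5,
      r2_eq_τ_mul_r6, r3_eq_τ_mul_r7, r4_eq_τ_mul_r8, ofReal_mul]
  · ring
  · ring
  · linear_combination r8 * ω ^ 24 * ofReal_τ_sq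
  · linear_combination r5 * ω ^ 18 * ofReal_τ_sq

lemma C_zero_eq : C 0 = goldenScalar * G 0 := by
  refine funext_fin_four ?_ ?_ ?_ ?_ <;>
    simp only [C_zero, G_zero, goldenScalar, Pi.mul_apply, Matrix.cons_val, r1_eq_τ_mul_r5,
      r2_eq_τ_mul_r6, r3_eq_τ_mul_r7, r4_eq_τ_mul_r8, ofReal_mul]
  · ring
  · ring
  · linear_combination -r5 * ω ^ 24 * ofReal_τ_sq
  · linear_combination r8 * ω ^ 18 * ofReal_τ_sq

lemma D_zero_eq : D 0 = goldenScalar * H 0 := by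
  refine funext_fin_four ?_ ?_ ?_ ?_ <;>
    simp only [D_zero, H_zero, goldenScalar, Pi.mul_apply, Matrix.cons_val, r1_eq_τ_mul_r5,
      r2_eq_τ_mul_r6, r3_eq_τ_mul_r7, r4_eq_τ_mul_r8, ofReal_mul]
  · ring
  · linear_combination -r7 * ω * ofReal_τ_sq
  · linear_combination r6 * ω * ofReal_τ_sq

lemma rotation_mul_G : rotation * G 0 = -(1 + rotation) * H 0 := by
  refine funext_fin_four ?_ ?_ ?_ ?_ <;>
    simp only [rotation, G_zero, H_zero, Pi.mul_apply, Pi.neg_apply, Pi.add_apply, Pi.one_apply,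
      Matrix.cons_val, r7_eq_cc_one_mul_r8, r6_eq_cc_eleven_mul_r5, r1_eq_cc_seven_mul_r3,
      r4_eq_cc_thirteen_mul_r2, ofReal_mul, ofReal_cc, Int.reduceSub, zpow_ofNat]
  · linear_combination r8 * (ω ^ 2 + 1 - ω ^ 30) * ω_pow_thirty
  · linear_combination r5 * (ω ^ 30 - 1 - ω ^ 22) * ω_pow_thirty
  · linear_combination r3 * (ω ^ 31 - ω - ω ^ 15) * ω_pow_thirty
  · linear_combination r2 * (ω ^ 27 + ω - ω ^ 31) * ω_pow_thirty

lemma rotation_mul_H : rotation * H 0 = E 0 + G 0 := by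
  refine funext_fin_four ?_ ?_ ?_ ?_ <;>
    simp only [rotation, E_zero, G_zero, H_zero, Pi.mul_apply, Pi.add_apply, Matrix.cons_val,
      r7_eq_cc_one_mul_r8, r6_eq_cc_eleven_mul_r5, r1_eq_cc_seven_mul_r3,
      r4_eq_cc_thirteen_mul_r2, ofReal_mul, ofReal_cc, Int.reduceSub, zpow_ofNat]
  · simp only [r5_eq_one_add_cc_two_mul_r8, ofReal_mul, ofReal_add, ofReal_one, ofReal_cc,
      Int.reduceSub, zpow_ofNat]
    linear_combination r8 * (ω ^ 28 - 1) * ω_pow_thirty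
  · simp only [r8_eq_cc_eight_sub_one_mul_r5, ofReal_mul, ofReal_sub, ofReal_one, ofReal_cc,
      Int.reduceSub, zpow_ofNat]
    linear_combination r5 * (1 - ω ^ 8) * ω_pow_thirty
  · simp only [r2_eq_one_add_cc_fourteen_mul_r3, ofReal_mul, ofReal_add, ofReal_one, ofReal_cc,
      Int.reduceSub, zpow_ofNat]
    linear_combination r3 * (ω - ω ^ 17) * ω_pow_thirty
  · simp only [r3_eq_cc_four_sub_one_mul_r2, ofReal_mul, ofReal_sub, ofReal_one, ofReal_cc,
      Int.reduceSub, zpow_ofNat]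
    linear_combination r2 * (ω ^ 5 - ω) * ω_pow_thirty

lemma rotation_mul_F : rotation * F 0 = -(A 0 + F 0) := by
  refine funext_fin_four ?_ ?_ ?_ ?_ <;>
    simp only [rotation, A_zero, F_zero, Pi.mul_apply, Pi.neg_apply, Pi.add_apply, Matrix.cons_val]
  · simp only [r1_eq_cc_one_mul_r6, ofReal_mul, ofReal_cc, Int.reduceSub, zpow_ofNat]
    linear_combination r6 * ω * ω_pow_thirty
  · simp only [r4_eq_cc_eleven_mul_r7, ofReal_mul, ofReal_cc, Int.reduceSub, zpow_ofNat]
    linear_combination r7 * ω ^ 11 * ω_pow_thirty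
  · simp only [r6_eq_cc_seven_mul_r4, ofReal_mul, ofReal_cc, Int.reduceSub, zpow_ofNat]
    linear_combination r4 * ω ^ 8 * ω_pow_thirty
  · simp only [r7_eq_cc_thirteen_mul_r1, ofReal_mul, ofReal_cc, Int.reduceSub, zpow_ofNat]
    linear_combination r1 * ω ^ 14 * ω_pow_thirty

lemma rotation_mul_B : rotation * B 0 = (1 + rotation ^ 2) * G 0 := by
  refine funext_fin_four ?_ ?_ ?_ ?_ <;>
    simp only [rotation, B_zero, G_zero, Pi.mul_apply, Pi.add_apply, Pi.pow_apply, Pi.one_apply,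
      Matrix.cons_val, r2_eq_cc_two_mul_r7, r3_eq_cc_eight_mul_r6, r8_eq_cc_fourteen_mul_r1,
      r5_eq_cc_four_mul_r4, ofReal_mul, ofReal_cc, Int.reduceSub, zpow_ofNat]
  · linear_combination -r7 * ω ^ 29 * ω_pow_thirty
  · linear_combination r6 * ω ^ 19 * ω_pow_thirty
  · linear_combination r1 * ω ^ 24 * ω_pow_thirty
  · linear_combination -r4 * ω ^ 18 * ω_pow_thirty

end Relations

section Lattice

lemma mul_mem_span_of_golden_relations {R : Type*} [CommRing R] {t φ e f g h : R}
    (hφ : φ ^ 2 = φ + 1) (hg : t * g = -(1 + t) * h) (hh : t * h = e + g)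
    (hf : t * f = -(φ * e + f)) (hφf : t * (φ * f) = (1 + t ^ 2) * g) (i : Fin 8) :
    t * ![φ * e, φ * f, φ * g, φ * h, e, f, g, h] i ∈
      Submodule.span ℤ (Set.range ![φ * e, φ * f, φ * g, φ * h, e, f, g, h]) := by
  have he : t * e = φ * e + φ * f + e + g + h := by
    linear_combination hφf - φ * hf + e * hφ + t * hg - t * hh - hg
  have hg' : t * g = -(e + g + h) := by linear_combination hg - hh
  let coeff : Matrix (Fin 8) (Fin 8) ℤ :=
    !![ 2,  1,  1,  1,  1,  1,  0,  0;
       -1, -1,  0,  0, -1,  0,  0,  0;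
       -1,  0, -1, -1,  0,  0,  0,  0;
        1,  0,  1,  0,  0,  0,  0,  0;
        1,  1,  0,  0,  1,  0,  1,  1;
       -1,  0,  0,  0,  0, -1,  0,  0;
        0,  0,  0,  0, -1,  0, -1, -1;
        0,  0,  0,  0,  1,  0,  1,  0]
  refine (Submodule.mem_span_range_iff_exists_fun ℤ).2 ⟨coeff i, ?_⟩
  fin_cases i <;>
    simp only [coeff, Fin.sum_univ_eight, Fin.zero_eta, Fin.mk_one, Fin.reduceFinMk,
      Matrix.of_apply, Matrix.cons_val, zsmul_eq_mul, Int.cast_ofNat, Int.cast_neg, Int.cast_one,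
      Int.cast_zero]
  · linear_combination -φ * he - (e + f) * hφ
  · linear_combination -φ * hf + e * hφ
  · linear_combination -φ * hg'
  · linear_combination -φ * hh
  · linear_combination -he
  · linear_combination -hf
  · linear_combination -hg'
  · linear_combination -hh

lemma pow_mul_mem_span {R ι : Type*} [Ring R] {t : R} {v : ι → R}
    (h : ∀ i, t * v i ∈ Submodule.span ℤ (Set.range v)) (n : ℕ) (i : ι) :
    t ^ n * v i ∈ Submodule.span ℤ (Set.range v) := by
  have mul_mem : Submodule.span ℤ (Set.range v) ≤
      (Submodule.span ℤ (Set.range v)).comap (LinearMap.mulLeft ℤ t) :=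
    Submodule.span_le.2 (Set.range_subset_iff.2 h)
  induction n with
  | zero =>
    rw [pow_zero, one_mul]
    exact Submodule.subset_span (Set.mem_range_self i)
  | succ n ih =>
    rw [pow_succ', mul_assoc]
    exact mul_mem ih

/-- The initial vectors of the eight cycles, the proposed generators of the lattice. -/
def initialVector : Fin 8 → Fin 4 → ℂ := ![A 0, B 0, C 0, D 0, E 0, F 0, G 0, H 0]

lemma exists_eq_rotation_pow_mul_initialVector {v : Fin 4 → ℂ} (hv : v ∈ S) :
    ∃ (n : ℕ) (i : Fin 8), v = rotation ^ n * initialVector i := by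
  obtain ⟨n, hn⟩ := hv
  have cycle_eq : ∀ i : Fin 8,
      ![A n, B n, C n, D n, E n, F n, G n, H n] i = rotation ^ (n : ℕ) * initialVector i := by
    intro i
    fin_cases i <;> refine funext_fin_four ?_ ?_ ?_ ?_ <;>
      simp only [initialVector, rotation, A, B, C, D, E, F, G, H, Fin.zero_eta, Fin.mk_one,
        Fin.reduceFinMk, Matrix.cons_val, Pi.mul_apply, Pi.pow_apply, Fin.val_zero] <;>
      ring
  rcases hn with rfl | rfl | rfl | rfl | rfl | rfl | rfl | rfl
  exacts [⟨n, 0, cycle_eq 0⟩, ⟨n, 1, cycle_eq 1⟩, ⟨n, 2, cycle_eq 2⟩, ⟨n, 3, cycle_eq 3⟩,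
    ⟨n, 4, cycle_eq 4⟩, ⟨n, 5, cycle_eq 5⟩, ⟨n, 6, cycle_eq 6⟩, ⟨n, 7, cycle_eq 7⟩]

lemma rotation_mul_initialVector_mem_span (i : Fin 8) :
    rotation * initialVector i ∈ Submodule.span ℤ (Set.range initialVector) := by
  have hF := rotation_mul_F
  have hB := rotation_mul_B
  rw [A_zero_eq] at hF
  rw [B_zero_eq] at hB
  rw [initialVector, A_zero_eq, B_zero_eq, C_zero_eq, D_zero_eq]
  exact mul_mem_span_of_golden_relations goldenScalar_sq rotation_mul_G rotation_mul_H hF hB i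

end Lattice

/-- every vector of S is an integer linear combination of
A₀, B₀, C₀, D₀, E₀, F₀, G₀, H₀. -/
theorem stmt13 :
    ∀ v ∈ S, ∃ m : Fin 8 → ℤ,
      v = ∑ i : Fin 8, m i • (![A 0, B 0, C 0, D 0, E 0, F 0, G 0, H 0] i) := by
  intro v hv
  obtain ⟨n, i, rfl⟩ := exists_eq_rotation_pow_mul_initialVector hv
  obtain ⟨m, hm⟩ := (Submodule.mem_span_range_iff_exists_fun ℤ).1
    (pow_mul_mem_span rotation_mul_initialVector_mem_span n i)
  exact ⟨m, hm.symm⟩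

end Triacontagonal
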